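/- arXiv:1801.05126 — 4 statements merged into one kernel-verified Lean document; each statement's English description precedes it below -/
import Mathlib

section
/- Let F be a field and G a group such that the group algebra FG contains at least one nonzero nilpotent element but only finitely many nonzero nilpotent elements. Then G is a torsion group, i.e. every element of G has finite order. -/
/-!
Suppose `g` has infinite order and let `x` be a nonzero nilpotent element. Conjugation by the powers
of `g` permutes the finite set of nonzero nilpotent elements, so by pigeonhole some power `h = g ^ m`
with `m ≥ 1` commutes with `x`. Then every `x * h ^ n` is again a nonzero nilpotent element, so by
pigeonhole again `x * k = x` for a power `k = h ^ l` with `l ≥ 1`. The support of `x` is thus a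
nonempty finite set stable under right translation by `k`, so `k`, and hence `g`, has finite order.
-/

/-- The nonempty finite support of `x` is stable under right translation by `k`, so it contains
every `s * k ^ n` once it contains `s`. -/
lemma isOfFinOrder_of_mul_of_eq {F G : Type*} [Field F] [Group G]
    {x : MonoidAlgebra F G} (hx : x ≠ 0) {k : G}
    (h : x * MonoidAlgebra.of F G k = x) : IsOfFinOrder k := by
  have hn : ∀ n : ℕ, x * MonoidAlgebra.of F G (k ^ n) = x := by
    intro n
    induction n with
    | zero => simp only [pow_zero, map_one, mul_one]
    | succ n ih => rw [pow_succ, map_mul, ← mul_assoc, ih, h]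
  obtain ⟨s, hs⟩ : ∃ s, x.coeff s ≠ 0 := by
    by_contra! hc
    exact hx (MonoidAlgebra.ext (Finsupp.ext hc))
  have hmem : ∀ n : ℕ, s * k ^ n ∈ (x.coeff.support : Set G) := by
    intro n
    have : (x * MonoidAlgebra.of F G (k ^ n)).coeff (s * k ^ n) = x.coeff s := by
      simp [MonoidAlgebra.of_apply]
    rw [hn n] at this
    simpa [this] using hs
  by_contra hk
  refine Set.infinite_of_injective_forall_mem (f := fun n : ℕ => s * k ^ n) ?_ hmem
    x.coeff.support.finite_toSet
  exact (mul_right_injective s).comp (injective_pow_iff_not_isOfFinOrder.mpr hk)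

/-- If the group algebra `FG` of a group `G` over a field `F` contains at least one
nonzero nilpotent element but only finitely many nonzero nilpotent elements,
then `G` is a torsion group: every element of `G` has finite order. -/
theorem stmt_1 (F G : Type*) [Field F] [Group G]
    (hex : ∃ x : MonoidAlgebra F G, x ≠ 0 ∧ IsNilpotent x)
    (hfin : {x : MonoidAlgebra F G | x ≠ 0 ∧ IsNilpotent x}.Finite) :
    ∀ g : G, IsOfFinOrder g := by
  intro g
  obtain ⟨x, hx0, hx⟩ := hex
  let u : G →* (MonoidAlgebra F G)ˣ := (MonoidAlgebra.of F G).toHomUnits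
  obtain ⟨m, hm, hcomm⟩ : ∃ m : ℕ, 0 < m ∧ Commute x (u (g ^ m) : MonoidAlgebra F G) := by
    have hmem : ∀ n : ℕ, (↑(u (g ^ n)) * x * ↑(u (g ^ n))⁻¹ : MonoidAlgebra F G) ∈
        {x : MonoidAlgebra F G | x ≠ 0 ∧ IsNilpotent x} := by
      intro n
      refine ⟨by rwa [Ne, Units.mul_left_eq_zero, Units.mul_right_eq_zero], ?_⟩
      obtain ⟨r, hr⟩ := hx
      exact ⟨r, by rw [Units.conj_pow, hr, mul_zero, zero_mul]⟩
    obtain ⟨i, j, hij, he⟩ : ∃ i j : ℕ, i < j ∧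
        (↑(u (g ^ i)) * x * ↑(u (g ^ i))⁻¹ : MonoidAlgebra F G) =
          ↑(u (g ^ j)) * x * ↑(u (g ^ j))⁻¹ := hfin.exists_lt_map_eq_of_forall_mem hmem
    obtain ⟨d, rfl⟩ := Nat.exists_eq_add_of_lt hij
    refine ⟨d + 1, d.succ_pos, ?_⟩
    rw [add_assoc, pow_add, map_mul, mul_inv_rev, Units.val_mul, Units.val_mul] at he
    simp only [← mul_assoc, Units.mul_left_inj] at he
    simp only [mul_assoc, Units.mul_right_inj] at he
    rw [← mul_assoc, Units.eq_mul_inv_iff_mul_eq] at he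
    exact he
  have hmem : ∀ n : ℕ, (x * u ((g ^ m) ^ n) : MonoidAlgebra F G) ∈
      {x : MonoidAlgebra F G | x ≠ 0 ∧ IsNilpotent x} := by
    intro n
    refine ⟨by rwa [Ne, Units.mul_left_eq_zero], Commute.isNilpotent_mul_right ?_ hx⟩
    rw [map_pow, Units.val_pow_eq_pow_val]
    exact hcomm.pow_right n
  obtain ⟨i, j, hij, he⟩ : ∃ i j : ℕ, i < j ∧
      (x * u ((g ^ m) ^ i) : MonoidAlgebra F G) = x * u ((g ^ m) ^ j) :=
    hfin.exists_lt_map_eq_of_forall_mem hmem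
  obtain ⟨d, rfl⟩ := Nat.exists_eq_add_of_lt hij
  rw [add_assoc, add_comm, pow_add, map_mul, Units.val_mul, ← mul_assoc, Units.mul_left_inj] at he
  have hk := isOfFinOrder_of_mul_of_eq hx0 (k := (g ^ m) ^ (d + 1)) he.symm
  exact (hk.of_pow d.succ_ne_zero).of_pow hm.ne'
end

section
/- Let F be a field, G a group, a ∈ G an element of finite order n, and g ∈ G. Put â = 1 + a + a² + ⋯ + a^(n−1) ∈ FG and x = â·g·(a − 1) ∈ FG. Then x² = 0, the element 1 + x is a unit of FG, and for every m ≥ 1 the left-normed iterated group commutator (1 + x, a, a, …, a) with a repeated m times, computed in the unit group of FG, equals 1 + x·(a − 1)^m. -/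
/-!
Identify `a` with its image in `FG`. Telescoping gives `(a - 1) â = a ^ n - 1 = 0`, so
`(a - 1) x = 0`: left multiplication by `a` fixes `x`, and `x` ends in the factor `a - 1`, so
`x² = 0`. Hence `1 + x` is a unit with inverse `1 - x`. For any `y` with `a y = y` and `y² = 0`,
`(1 + y, a) = (1 - y)(1 + a⁻¹ y a) = (1 - y)(1 + y a) = 1 + y (a - 1)` (`commutator_one_add`).
The element `y (a - 1)` inherits both properties of `y`, so this step iterates
(`iterate_commutator_one_add`).
-/

/-- The one-step commutator `(1 + y, b) = 1 + y (b - 1)` when `b y = y` and `y² = 0`. -/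
lemma commutator_one_add {R : Type*} [Ring R] (z b : Rˣ) (y : R) (hz : (z : R) = 1 + y)
    (hb : (b : R) * y = y) (hy : y * y = 0) :
    ((z⁻¹ * b⁻¹ * z * b : Rˣ) : R) = 1 + y * ((b : R) - 1) := by
  have hb' : ((b⁻¹ : Rˣ) : R) * y = y := by
    rw [Units.inv_mul_eq_iff_eq_mul, hb]
  have hz' : ((z⁻¹ : Rˣ) : R) = 1 - y := by
    rw [Units.inv_eq_of_mul_eq_one_right]
    rw [hz, add_mul, one_mul, mul_sub, hy, mul_one, sub_zero, sub_add_cancel]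
  push_cast
  rw [hz', hz]
  have h1 : ((b⁻¹ : Rˣ) : R) * (1 + y) * b = 1 + y * b := by
    rw [mul_add, hb', mul_one, add_mul, Units.inv_mul]
  rw [mul_assoc (1 - y), mul_assoc (1 - y), h1]
  have h2 : y * (y * (b : R)) = 0 := by rw [← mul_assoc, hy, zero_mul]
  rw [sub_mul, one_mul, mul_add, h2, mul_sub]
  simp only [mul_one, add_zero]
  abel

lemma iterate_commutator_one_add {R : Type*} [Ring R] (b : Rˣ) (m : ℕ) :
    ∀ (z : Rˣ) (y : R), (z : R) = 1 + y → (b : R) * y = y → y * y = 0 →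
      (((fun z : Rˣ => z⁻¹ * b⁻¹ * z * b)^[m] z : Rˣ) : R) = 1 + y * ((b : R) - 1) ^ m := by
  induction m with
  | zero => intro z y hz _ _; simpa using hz
  | succ k ih =>
    intro z y hz hb hy
    rw [Function.iterate_succ_apply, pow_succ', ← mul_assoc]
    refine ih _ _ (commutator_one_add z b y hz hb hy) (by rw [← mul_assoc, hb]) ?_
    have h : ((b : R) - 1) * y = 0 := by rw [sub_mul, hb, one_mul, sub_self]
    rw [mul_assoc, ← mul_assoc _ y, h, zero_mul, mul_zero]


/-- Let `a ∈ G` have finite order `n`, `g ∈ G`, `â = 1 + a + ⋯ + a^(n−1) ∈ FG` and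
`x = â·g·(a − 1)`. Then `x² = 0`, `1 + x` is a unit, and for every `m ≥ 1` the
left-normed iterated commutator `(1 + x, a, …, a)` (with `a` repeated `m` times),
computed in the unit group of `FG`, equals `1 + x·(a − 1)^m`. -/
theorem stmt_15 (F G : Type*) [Field F] [Group G] (a g : G) (n : ℕ) (hn : 0 < n)
    (ha : orderOf a = n)
    (ahat x : MonoidAlgebra F G)
    (hhat : ahat = ∑ i ∈ Finset.range n, MonoidAlgebra.of F G (a ^ i))
    (hx : x = ahat * MonoidAlgebra.of F G g * (MonoidAlgebra.of F G a - 1)) :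
    x * x = 0 ∧ IsUnit (1 + x) ∧
      ∀ u : (MonoidAlgebra F G)ˣ, (u : MonoidAlgebra F G) = 1 + x →
        ∀ m : ℕ, 1 ≤ m →
          (((fun z : (MonoidAlgebra F G)ˣ =>
              z⁻¹ * ((MonoidAlgebra.of F G).toHomUnits a)⁻¹ * z *
                (MonoidAlgebra.of F G).toHomUnits a)^[m] u :
              (MonoidAlgebra F G)ˣ) : MonoidAlgebra F G)
            = 1 + x * (MonoidAlgebra.of F G a - 1) ^ m := by
  have h0 : (MonoidAlgebra.of F G a - 1) * ahat = 0 := by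
    simp only [hhat, map_pow]
    rw [mul_geom_sum, ← map_pow, ← ha, pow_orderOf_eq_one, map_one, sub_self]
  have h1 : (MonoidAlgebra.of F G a - 1) * x = 0 := by
    rw [hx, ← mul_assoc, ← mul_assoc, h0, zero_mul, zero_mul]
  have hxx : x * x = 0 := by
    nth_rewrite 1 [hx]
    rw [mul_assoc, h1, mul_zero]
  have hax : MonoidAlgebra.of F G a * x = x := by
    rwa [sub_mul, one_mul, sub_eq_zero] at h1
  refine ⟨hxx, ?_, fun u hu m _ => ?_⟩
  · exact IsNilpotent.isUnit_one_add ⟨2, by rw [pow_two, hxx]⟩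
  · exact iterate_commutator_one_add ((MonoidAlgebra.of F G).toHomUnits a) m u x hu hax hxx
end

section
/- Let F be a field of characteristic p > 0, G a group, c a central element of G of order p, and put ĉ = 1 + c + c² + ⋯ + c^(p−1) ∈ FG. Then ĉ² = 0, and for all g, h ∈ G and every m ≥ 0, setting q = p^m, the left-normed iterated group commutator (1 + gĉ, h, h, …, h) with h repeated q times, computed in the unit group of FG, equals 1 + ĉ·(h^(−q)·g·h^q − g). -/
/-!
Conjugation `φ : x ↦ h⁻¹ x h` is an `F`-linear endomorphism of `FG`, and `ĉ` is central with
`ĉ² = 0`, because `c ĉ = ĉ` and hence `ĉ² = p ĉ`. On units of the form `1 + ĉ a`, whose inverse is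
`1 - ĉ a`, the commutator with `h` is therefore additive: it sends `1 + ĉ a` to
`1 + ĉ (φ a - a)` (`coe_commutator`). Iterating `q = p ^ m` times applies `(φ - 1) ^ q`, which is
`φ ^ q - 1` since the endomorphism ring has characteristic `p`.
-/

/-- Conjugation `x ↦ h⁻¹ x h` as an `F`-linear endomorphism. -/
def conjEnd (F : Type*) {A : Type*} [CommRing F] [Ring A] [Algebra F A] (h : Aˣ) :
    Module.End F A :=
  LinearMap.mulLeft F (↑h⁻¹ : A) * LinearMap.mulRight F (h : A)

theorem conjEnd_apply (F : Type*) {A : Type*} [CommRing F] [Ring A] [Algebra F A] (h : Aˣ)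
    (x : A) : conjEnd F h x = ↑h⁻¹ * x * (h : A) := by
  simp [conjEnd, mul_assoc]

theorem conjEnd_pow_apply (F : Type*) {A : Type*} [CommRing F] [Ring A] [Algebra F A] (h : Aˣ)
    (n : ℕ) (x : A) : (conjEnd F h ^ n) x = ↑(h ^ n)⁻¹ * x * ((h ^ n : Aˣ) : A) := by
  induction n with
  | zero => simp
  | succ n ih =>
    rw [pow_succ', Module.End.mul_apply, ih, conjEnd_apply, pow_succ]
    simp only [mul_inv_rev, Units.val_mul, mul_assoc]

/-- Modulo the square-zero ideal generated by a central `e`, the commutator with `h` acts on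
`1 + e a` through the linear map `φ - 1`, where `φ` is conjugation by `h`. -/
theorem coe_commutator (F : Type*) {A : Type*} [CommRing F] [Ring A] [Algebra F A] (h : Aˣ)
    {e : A} (he : ∀ x, Commute e x) (he2 : e * e = 0) (z : Aˣ) (a : A)
    (hz : (z : A) = 1 + e * a) :
    ((z⁻¹ * h⁻¹ * z * h : Aˣ) : A) = 1 + e * ((conjEnd F h - 1) a) := by
  have h0 (x y : A) : e * x * (e * y) = 0 := by
    rw [mul_assoc, ← mul_assoc x, ← (he x).eq, mul_assoc e x, ← mul_assoc e e, he2, zero_mul]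
  have hinv : (↑z⁻¹ : A) = 1 - e * a := by
    apply Units.inv_eq_of_mul_eq_one_right
    rw [hz, mul_sub, mul_one, add_mul, one_mul, h0]
    abel
  have hconj : (↑h⁻¹ : A) * (1 + e * a) * h = 1 + e * conjEnd F h a := by
    rw [conjEnd_apply, mul_add, add_mul, mul_one, Units.inv_mul, ← mul_assoc, ← (he _).eq]
    simp only [mul_assoc]
  calc ((z⁻¹ * h⁻¹ * z * h : Aˣ) : A)
      = (1 - e * a) * (↑h⁻¹ * (1 + e * a) * h) := by
        simp only [Units.val_mul, hinv, hz, mul_assoc]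
    _ = 1 + e * ((conjEnd F h - 1) a) := by
        rw [hconj, mul_add, mul_one, sub_mul, one_mul, h0, LinearMap.sub_apply,
          Module.End.one_apply, mul_sub]
        abel

theorem coe_iterate_commutator (F : Type*) {A : Type*} [CommRing F] [Ring A] [Algebra F A]
    (h : Aˣ) {e : A} (he : ∀ x, Commute e x) (he2 : e * e = 0) (z : Aˣ) (a : A)
    (hz : (z : A) = 1 + e * a) (n : ℕ) :
    (((fun z : Aˣ => z⁻¹ * h⁻¹ * z * h)^[n] z : Aˣ) : A)
      = 1 + e * (((conjEnd F h - 1) ^ n) a) := by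
  induction n with
  | zero => simpa using hz
  | succ n ih =>
    rw [Function.iterate_succ_apply', pow_succ', Module.End.mul_apply]
    exact coe_commutator F h he he2 _ _ ih

/-- Let `char F = p > 0`, let `c` be a central element of `G` of order `p`, and let
`ĉ = 1 + c + ⋯ + c^(p−1) ∈ FG`. Then `ĉ² = 0`, and for all `g, h ∈ G` and `m ≥ 0`,
with `q = p^m`, the element `1 + gĉ` is a unit and the left-normed iterated commutator
`(1 + gĉ, h, …, h)` (with `h` repeated `q` times), computed in the unit group of `FG`,
equals `1 + ĉ·(h^(−q)·g·h^q − g)`. -/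
theorem stmt_16 (F G : Type*) [Field F] [Group G] (p : ℕ) (hp : 0 < p) (hFp : CharP F p)
    (c : G) (hc : c ∈ Subgroup.center G) (hcp : orderOf c = p)
    (chat : MonoidAlgebra F G)
    (hhat : chat = ∑ i ∈ Finset.range p, MonoidAlgebra.of F G (c ^ i)) :
    chat * chat = 0 ∧
      ∀ g h : G, ∀ m : ℕ,
        ∃ u : (MonoidAlgebra F G)ˣ,
          (u : MonoidAlgebra F G) = 1 + MonoidAlgebra.of F G g * chat ∧
          (((fun z : (MonoidAlgebra F G)ˣ =>
              z⁻¹ * ((MonoidAlgebra.of F G).toHomUnits h)⁻¹ * z *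
                (MonoidAlgebra.of F G).toHomUnits h)^[p ^ m] u :
              (MonoidAlgebra F G)ˣ) : MonoidAlgebra F G)
            = 1 + chat * (MonoidAlgebra.of F G ((h ^ p ^ m)⁻¹ * g * h ^ p ^ m)
                - MonoidAlgebra.of F G g) := by
  have : NeZero p := ⟨hp.ne'⟩
  have : Fact p.Prime := ⟨(CharP.char_is_prime_or_zero F p).resolve_right hp.ne'⟩
  have : CharP (MonoidAlgebra F G) p := charP_of_injective_algebraMap' F p
  have : CharP (Module.End F (MonoidAlgebra F G)) p := charP_of_injective_algebraMap' F p
  have hcomm : ∀ x, Commute chat x := by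
    intro x
    rw [hhat]
    refine Commute.sum_left _ _ _ fun i _ => ?_
    refine MonoidAlgebra.single_commute (fun y => ?_) (fun r => Commute.one_left r) x
    exact (Subgroup.mem_center_iff.1 (pow_mem hc i) y).symm
  have hmul : MonoidAlgebra.of F G c * chat = chat := by
    have h1 := mul_geom_sum (MonoidAlgebra.of F G c) p
    simp only [← map_pow] at h1
    rw [← hhat, ← hcp, pow_orderOf_eq_one, map_one, sub_self, sub_mul, one_mul] at h1
    exact sub_eq_zero.1 h1
  have hmuli (i : ℕ) : MonoidAlgebra.of F G (c ^ i) * chat = chat := by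
    induction i with
    | zero => simp [← MonoidAlgebra.one_def]
    | succ i ih => rw [pow_succ, map_mul, mul_assoc, hmul, ih]
  have hsq : chat * chat = 0 := by
    nth_rewrite 1 [hhat]
    rw [Finset.sum_mul, Finset.sum_congr rfl fun i _ => hmuli i, Finset.sum_const,
      Finset.card_range, nsmul_eq_mul, CharP.cast_eq_zero, zero_mul]
  refine ⟨hsq, fun g h m => ?_⟩
  have hnil : MonoidAlgebra.of F G g * chat * (MonoidAlgebra.of F G g * chat) = 0 := by
    rw [mul_assoc, ← mul_assoc chat, (hcomm _).eq, mul_assoc _ chat, hsq, mul_zero, mul_zero]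
  refine ⟨⟨1 + MonoidAlgebra.of F G g * chat, 1 - MonoidAlgebra.of F G g * chat, ?_, ?_⟩,
    rfl, ?_⟩
  · rw [mul_sub, mul_one, add_mul, one_mul, hnil]
    abel
  · rw [mul_add, mul_one, sub_mul, one_mul, hnil]
    abel
  · rw [coe_iterate_commutator F _ hcomm hsq _ (MonoidAlgebra.of F G g)
      (by rw [(hcomm _).eq]),
      sub_pow_char_pow_of_commute _ _ (Commute.one_right _), one_pow, LinearMap.sub_apply,
      conjEnd_pow_apply, Module.End.one_apply, ← map_pow, ← map_inv]
    simp only [MonoidHom.coe_toHomUnits, map_mul]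
end

section
/- Let F be a field, G a group, g ∈ G an element of infinite order, and u a nonzero nilpotent element of FG commuting with g (i.e. gu = ug in FG). Then the elements u·(g^i − 1), for i ranging over the positive integers, are pairwise distinct nonzero nilpotent elements of FG; in particular FG contains infinitely many nonzero nilpotent elements. -/
/-! Right multiplication of `u` by `h : G` translates the coefficient function of `u`. If `u * h = u`,
the support of `u` is stable under translation by the powers of `h`, so, being finite and (for
`u ≠ 0`) nonempty, it forces `h` to have finite order (`isOfFinOrder_of_mul_of_eq_self`). Hence the
elements `u * g ^ i`, `i : ℕ`, are pairwise distinct (`mul_of_pow_injective`). Subtracting `u` gives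
that the `u * (g ^ i - 1)` are pairwise distinct, and comparison with `i = 0` gives that they are
nonzero for `i > 0`. They are nilpotent because `u` is nilpotent and commutes with `g ^ i - 1`. -/

theorem isOfFinOrder_of_mul_of_eq_self {F G : Type*} [Field F] [Group G] {h : G}
    {u : MonoidAlgebra F G} (hu : u ≠ 0) (huh : u * MonoidAlgebra.of F G h = u) :
    IsOfFinOrder h := by
  by_contra hfin
  have hpow : ∀ n : ℕ, u * MonoidAlgebra.of F G (h ^ n) = u := by
    intro n
    induction n with
    | zero => rw [pow_zero, map_one, mul_one]
    | succ k ih => rw [pow_succ, map_mul, ← mul_assoc, ih, huh]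
  have hcoeff : ∀ (n : ℕ) (x : G), u.coeff (x * h ^ n) = u.coeff x := by
    intro n x
    conv_lhs => rw [← hpow n]
    rw [MonoidAlgebra.of_apply, MonoidAlgebra.coeff_mul_single_apply, mul_one,
      mul_inv_cancel_right]
  obtain ⟨x, hx⟩ : ∃ x, u.coeff x ≠ 0 := by
    by_contra! hzero
    exact hu (by ext x; simpa using hzero x)
  have hinj : Function.Injective fun n : ℕ => x * h ^ n := fun m n hmn =>
    (injective_pow_iff_not_isOfFinOrder.2 hfin) (mul_left_cancel hmn)
  refine (Set.infinite_range_of_injective hinj) (u.coeff.support.finite_toSet.subset ?_)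
  rintro _ ⟨n, rfl⟩
  simpa [hcoeff n x] using hx

theorem mul_of_pow_injective {F G : Type*} [Field F] [Group G] {g : G} (hg : ¬ IsOfFinOrder g)
    {u : MonoidAlgebra F G} (hu : u ≠ 0) :
    Function.Injective fun i : ℕ => u * MonoidAlgebra.of F G (g ^ i) := by
  intro i j hij
  wlog hlt : i < j generalizing i j
  · by_contra hne
    exact hne (this hij.symm (by omega)).symm
  refine absurd (isOfFinOrder_of_mul_of_eq_self (h := g ^ (j - i)) hu ?_) fun hfin =>
    hg (hfin.of_pow (by omega))
  have hij' := congrArg (· * MonoidAlgebra.of F G (g ^ i)⁻¹) hij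
  simp only [mul_assoc, ← map_mul, mul_inv_cancel, map_one, mul_one] at hij'
  rw [pow_sub g hlt.le]
  exact hij'.symm

/-- Let `g ∈ G` have infinite order and let `u` be a nonzero nilpotent element of `FG`
commuting with `g`. Then the elements `u·(g^i − 1)` for `i ≥ 1` are pairwise distinct
nonzero nilpotent elements of `FG`; in particular `FG` has infinitely many nonzero
nilpotent elements. -/
theorem stmt_17 (F G : Type*) [Field F] [Group G] (g : G) (hg : ¬ IsOfFinOrder g)
    (u : MonoidAlgebra F G) (hu : u ≠ 0) (hnil : IsNilpotent u)
    (hcomm : MonoidAlgebra.of F G g * u = u * MonoidAlgebra.of F G g) :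
    (∀ i : ℕ, 0 < i →
        u * (MonoidAlgebra.of F G (g ^ i) - 1) ≠ 0 ∧
        IsNilpotent (u * (MonoidAlgebra.of F G (g ^ i) - 1))) ∧
      (∀ i j : ℕ, 0 < i → 0 < j → i ≠ j →
        u * (MonoidAlgebra.of F G (g ^ i) - 1) ≠ u * (MonoidAlgebra.of F G (g ^ j) - 1)) ∧
      {x : MonoidAlgebra F G | x ≠ 0 ∧ IsNilpotent x}.Infinite := by
  have hinj : Function.Injective fun i : ℕ => u * (MonoidAlgebra.of F G (g ^ i) - 1) := by
    intro i j hij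
    simp only [mul_sub, sub_left_inj] at hij
    exact mul_of_pow_injective hg hu hij
  have hmain : ∀ i : ℕ, 0 < i →
      u * (MonoidAlgebra.of F G (g ^ i) - 1) ≠ 0 ∧
      IsNilpotent (u * (MonoidAlgebra.of F G (g ^ i) - 1)) := by
    refine fun i hi => ⟨fun h0 => hi.ne' (hinj ?_), ?_⟩
    · simpa only [pow_zero, map_one, sub_self, mul_zero] using h0
    · have hc : Commute u (MonoidAlgebra.of F G (g ^ i) - 1) := by
        rw [map_pow]
        exact (Commute.pow_right hcomm.symm i).sub_right (Commute.one_right u)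
      exact hc.isNilpotent_mul_right hnil
  refine ⟨hmain, fun i j _ _ hne h => hne (hinj h), ?_⟩
  exact Set.infinite_of_injective_forall_mem (hinj.comp Nat.succ_injective)
    fun i => hmain _ i.succ_pos
end
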